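/- arXiv:1806.07591 — 2 statements merged into one kernel-verified Lean document; each statement's English description precedes it below -/
import Mathlib

section
/- Let V ⊆ ℝ³ be a compact convex set with positive Lebesgue measure and let y be a point in the interior of V. Then there exists a point y' ∈ V such that ∫_V ( |x − y|² − min(|x − y|, |x − y'|)² ) dx ≥ Γ₁ · |V|^{5/3}, where Γ₁ := (2/5)^{2/3}/40. -/
open MeasureTheory

noncomputable section

/-- Euclidean 3-space. -/
abbrev E3 := EuclideanSpace ℝ (Fin 3)

/-- Γ₁ = (2/5)^{2/3} / 40 -/
def Gamma1 : ℝ := ((2 / 5 : ℝ) ^ ((2 : ℝ) / 3)) / 40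

/-!
Remove from `V` the cube centred at `y` with half-side `a`. What remains is covered by the `2 * n`
caps of `V` lying at distance at least `a` from `y` in one of the directions `±b i` of an
orthonormal basis, so one of these caps, say in direction `u`, has volume at least
`(|V| - (2 * a) ^ n) / (2 * n)`. On it, replacing `y` by `y + a • u` lowers the squared distance by
at least `a ^ 2`. The point `y + a • u` may lie outside `V`, but its metric projection to `V` is at
least as close to every point of `V`. Giving the cube the volume `2 / (n + 2) * |V|` maximizes the
resulting bound `a ^ 2 * (|V| - (2 * a) ^ n) / (2 * n)`; for `n = 3` this is the fraction `2 / 5` in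
`Gamma1`.
-/

open Module
open scoped RealInnerProductSpace

section Gain

variable {X : Type*} [PseudoMetricSpace X]

/-- The decrease at `x` of the squared distance to the set of centres when the centre `y` is
supplemented by the centre `y'`. -/
def distSqGain (y y' x : X) : ℝ := dist x y ^ 2 - min (dist x y) (dist x y') ^ 2

lemma distSqGain_nonneg (y y' x : X) : 0 ≤ distSqGain y y' x :=
  sub_nonneg.2 <| pow_le_pow_left₀ (by positivity) (min_le_left _ _) 2

lemma sub_dist_sq_le_distSqGain {y y' z x : X} (h : dist x y' ≤ dist x z) :
    dist x y ^ 2 - dist x z ^ 2 ≤ distSqGain y y' x :=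
  sub_le_sub_left (pow_le_pow_left₀ (by positivity) ((min_le_right _ _).trans h) 2) _

lemma continuous_distSqGain (y y' : X) : Continuous (distSqGain y y') := by
  unfold distSqGain
  fun_prop

end Gain

section InnerProductSpace

variable {E : Type*} [NormedAddCommGroup E] [InnerProductSpace ℝ E]

lemma exists_mem_forall_dist_le_of_isComplete_convex {V : Set E} (hne : V.Nonempty)
    (hcomplete : IsComplete V) (hconv : Convex ℝ V) (q : E) :
    ∃ p ∈ V, ∀ x ∈ V, dist x p ≤ dist x q := by
  obtain ⟨p, hpV, hp⟩ := exists_norm_eq_iInf_of_complete_convex hne hcomplete hconv q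
  refine ⟨p, hpV, fun x hx => ?_⟩
  have hobtuse : ⟪x - p, q - p⟫ ≤ 0 := by
    rw [real_inner_comm]
    exact (norm_eq_iInf_iff_real_inner_le_zero hconv hpV).1 hp x hx
  have hexpand : ‖x - q‖ ^ 2 = ‖x - p‖ ^ 2 - 2 * ⟪x - p, q - p⟫ + ‖q - p‖ ^ 2 := by
    rw [← norm_sub_sq_real, sub_sub_sub_cancel_right]
  rw [dist_eq_norm, dist_eq_norm]
  exact le_of_sq_le_sq (by linarith [sq_nonneg ‖q - p‖]) (norm_nonneg _)

lemma sq_le_dist_sq_sub_dist_add_smul_sq {u x y : E} {a : ℝ} (hu : ‖u‖ = 1) (ha : 0 ≤ a)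
    (hx : a ≤ ⟪u, x - y⟫) : a ^ 2 ≤ dist x y ^ 2 - dist x (y + a • u) ^ 2 := by
  have hexpand : dist x (y + a • u) ^ 2 = dist x y ^ 2 - 2 * (a * ⟪u, x - y⟫) + a ^ 2 := by
    rw [dist_eq_norm, dist_eq_norm, ← sub_sub, norm_sub_sq_real, real_inner_smul_right,
      real_inner_comm, norm_smul, hu, mul_one, Real.norm_eq_abs, sq_abs]
  linarith [mul_le_mul_of_nonneg_left hx ha]

/-- The part of `V` lying at signed distance at least `a` from `y` in the direction `u`
(meant for unit vectors `u`). -/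
def cap (V : Set E) (y u : E) (a : ℝ) : Set E := {x ∈ V | a ≤ ⟪u, x - y⟫}

lemma cap_subset (V : Set E) (y u : E) (a : ℝ) : cap V y u a ⊆ V := Set.sep_subset _ _

lemma isClosed_cap {V : Set E} (hV : IsClosed V) (y u : E) (a : ℝ) : IsClosed (cap V y u a) := by
  have hhalfspace : IsClosed {x : E | a ≤ ⟪u, x - y⟫} :=
    isClosed_le continuous_const (by fun_prop)
  exact hV.inter hhalfspace

end InnerProductSpace

section Orthonormal

variable {E ι : Type*} [NormedAddCommGroup E] [InnerProductSpace ℝ E] [Fintype ι]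

/-- The cube with centre `y`, half-side `a` and edges parallel to the orthonormal basis `b`. -/
def basisCube (b : OrthonormalBasis ι ℝ E) (y : E) (a : ℝ) : Set E :=
  {x | ∀ i, |⟪b i, x - y⟫| ≤ a}

/-- The vectors `b i` and `-b i` of an orthonormal basis `b`: the outer normals of the facets of
`basisCube b y a`. -/
def signedBasis (b : OrthonormalBasis ι ℝ E) : ι ⊕ ι → E := Sum.elim b (fun i => -b i)

lemma norm_signedBasis (b : OrthonormalBasis ι ℝ E) (k : ι ⊕ ι) : ‖signedBasis b k‖ = 1 := by
  cases k <;> simp [signedBasis]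

lemma subset_basisCube_union_iUnion_cap (b : OrthonormalBasis ι ℝ E) (V : Set E) (y : E) (a : ℝ) :
    V ⊆ basisCube b y a ∪ ⋃ k, cap V y (signedBasis b k) a := by
  intro x hx
  by_cases hcube : x ∈ basisCube b y a
  · exact Or.inl hcube
  obtain ⟨i, hi⟩ : ∃ i, a < |⟪b i, x - y⟫| := by simpa [basisCube] using hcube
  refine Or.inr (Set.mem_iUnion.2 ?_)
  rcases lt_abs.1 hi with hpos | hneg
  · exact ⟨Sum.inl i, hx, hpos.le⟩
  · exact ⟨Sum.inr i, hx, by simpa [signedBasis, inner_neg_left] using hneg.le⟩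

variable [FiniteDimensional ℝ E] [MeasurableSpace E] [BorelSpace E]

lemma volume_basisCube (b : OrthonormalBasis ι ℝ E) (y : E) {a : ℝ} (ha : 0 ≤ a) :
    volume (basisCube b y a) = ENNReal.ofReal ((2 * a) ^ Fintype.card ι) := by
  have hcoord := (EuclideanSpace.volume_preserving_symm_measurableEquiv_toLp ι).comp
    b.measurePreserving_repr
  have hpreimage : basisCube b y a =
      ((MeasurableEquiv.toLp 2 (ι → ℝ)).symm ∘ b.repr) ⁻¹'
        Set.Icc (fun i => ⟪b i, y⟫ - a) (fun i => ⟪b i, y⟫ + a) := by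
    ext x
    have hbounds (i : ι) : |⟪b i, x - y⟫| ≤ a ↔
        ⟪b i, y⟫ - a ≤ ⟪b i, x⟫ ∧ ⟪b i, x⟫ ≤ ⟪b i, y⟫ + a := by
      rw [inner_sub_right, abs_sub_le_iff, sub_le_iff_le_add', sub_le_comm, and_comm]
    simp [basisCube, hbounds, Pi.le_def, forall_and, b.repr_apply_apply]
  rw [hpreimage, hcoord.measure_preimage measurableSet_Icc.nullMeasurableSet, Real.volume_Icc_pi]
  simp [← two_mul, ENNReal.ofReal_pow (mul_nonneg zero_le_two ha)]

lemma volume_real_le_add_sum_cap (b : OrthonormalBasis ι ℝ E) {V : Set E} (hV : volume V ≠ ⊤)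
    (y : E) {a : ℝ} (ha : 0 ≤ a) :
    volume.real V ≤
      (2 * a) ^ Fintype.card ι + ∑ k, volume.real (cap V y (signedBasis b k) a) := by
  have hcube_ne_top : volume (basisCube b y a) ≠ ⊤ :=
    volume_basisCube b y ha ▸ ENNReal.ofReal_ne_top
  have hcaps_ne_top : volume (⋃ k, cap V y (signedBasis b k) a) ≠ ⊤ :=
    measure_ne_top_of_subset (Set.iUnion_subset fun _ => cap_subset ..) hV
  have hcube_real : volume.real (basisCube b y a) = (2 * a) ^ Fintype.card ι := by
    rw [Measure.real, volume_basisCube b y ha, ENNReal.toReal_ofReal (by positivity)]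
  calc volume.real V
      ≤ volume.real (basisCube b y a ∪ ⋃ k, cap V y (signedBasis b k) a) :=
        measureReal_mono (subset_basisCube_union_iUnion_cap b V y a)
          (measure_union_ne_top hcube_ne_top hcaps_ne_top)
    _ ≤ volume.real (basisCube b y a) + volume.real (⋃ k, cap V y (signedBasis b k) a) :=
        measureReal_union_le _ _
    _ ≤ (2 * a) ^ Fintype.card ι + ∑ k, volume.real (cap V y (signedBasis b k) a) :=
        add_le_add hcube_real.le (measureReal_iUnion_fintype_le _)

end Orthonormal

section FiniteDimensional

variable {E : Type*} [NormedAddCommGroup E] [InnerProductSpace ℝ E] [FiniteDimensional ℝ E]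
  [MeasurableSpace E] [BorelSpace E] {V : Set E}

lemma exists_norm_eq_one_le_volume_real_cap [Nontrivial E] (hV : volume V ≠ ⊤) (y : E) {a : ℝ}
    (ha : 0 ≤ a) :
    ∃ u : E, ‖u‖ = 1 ∧
      (volume.real V - (2 * a) ^ finrank ℝ E) / (2 * finrank ℝ E) ≤ volume.real (cap V y u a) := by
  set b := stdOrthonormalBasis ℝ E
  have hn : 0 < finrank ℝ E := finrank_pos
  have : Nonempty (Fin (finrank ℝ E)) := ⟨⟨0, hn⟩⟩
  have hcover := volume_real_le_add_sum_cap b hV y ha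
  rw [Fintype.card_fin] at hcover
  have hsum : ∑ _k : Fin (finrank ℝ E) ⊕ Fin (finrank ℝ E),
        (volume.real V - (2 * a) ^ finrank ℝ E) / (2 * finrank ℝ E) ≤
      ∑ k, volume.real (cap V y (signedBasis b k) a) := by
    rw [Finset.sum_const, Finset.card_univ, Fintype.card_sum, Fintype.card_fin, nsmul_eq_mul,
      Nat.cast_add, ← two_mul, mul_div_cancel₀ _ (by positivity)]
    linarith
  obtain ⟨k, -, hk⟩ := Finset.exists_le_of_sum_le Finset.univ_nonempty hsum
  exact ⟨signedBasis b k, norm_signedBasis b k, hk⟩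

lemma exists_mem_sq_mul_volume_real_cap_le_setIntegral (hcomp : IsCompact V) (hconv : Convex ℝ V)
    (hne : V.Nonempty) (y : E) {u : E} (hu : ‖u‖ = 1) {a : ℝ} (ha : 0 ≤ a) :
    ∃ y' ∈ V, a ^ 2 * volume.real (cap V y u a) ≤ ∫ x in V, distSqGain y y' x := by
  obtain ⟨y', hy'V, hy'⟩ :=
    exists_mem_forall_dist_le_of_isComplete_convex hne hcomp.isComplete hconv (y + a • u)
  have hint : IntegrableOn (distSqGain y y') V :=
    (continuous_distSqGain y y').continuousOn.integrableOn_compact hcomp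
  have hgain : ∀ x ∈ cap V y u a, a ^ 2 ≤ distSqGain y y' x := fun x hx =>
    (sq_le_dist_sq_sub_dist_add_smul_sq hu ha hx.2).trans (sub_dist_sq_le_distSqGain (hy' x hx.1))
  refine ⟨y', hy'V, ?_⟩
  calc a ^ 2 * volume.real (cap V y u a)
      ≤ ∫ x in cap V y u a, distSqGain y y' x :=
        setIntegral_ge_of_const_le_real (isClosed_cap hcomp.isClosed y u a).measurableSet
          (measure_ne_top_of_subset (cap_subset ..) hcomp.measure_ne_top) hgain
          (hint.mono_set (cap_subset ..))
    _ ≤ ∫ x in V, distSqGain y y' x :=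
        setIntegral_mono_set hint (.of_forall (distSqGain_nonneg y y'))
          (cap_subset ..).eventuallyLE

end FiniteDimensional

/-- The `n`-dimensional analogue of `Gamma1`, equal to the maximum over `0 ≤ θ ≤ 1` of
`θ ^ (2 / n) * (1 - θ) / (8 * n)`, attained at `θ = 2 / (n + 2)`. Meaningful only for `n ≠ 0`. -/
def gammaDim (n : ℕ) : ℝ := (2 / (n + 2) : ℝ) ^ (2 / n : ℝ) / (8 * (n + 2))

lemma gammaDim_three : gammaDim 3 = Gamma1 := by
  norm_num [gammaDim, Gamma1]

lemma exists_sq_mul_sub_pow_div_eq_gammaDim_mul {n : ℕ} (hn : n ≠ 0) {v : ℝ} (hv : 0 ≤ v) :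
    ∃ a, 0 ≤ a ∧
      a ^ 2 * ((v - (2 * a) ^ n) / (2 * n)) = gammaDim n * v ^ (1 + 2 / n : ℝ) := by
  set side : ℝ := (2 / (n + 2) * v) ^ (n⁻¹ : ℝ) with hside
  have hside_pow : side ^ n = 2 / (n + 2) * v := Real.rpow_inv_natCast_pow (by positivity) hn
  have hside_sq : side ^ 2 = (2 / (n + 2) : ℝ) ^ (2 / n : ℝ) * v ^ (2 / n : ℝ) := by
    rw [hside, ← Real.rpow_mul_natCast (by positivity), ← Real.mul_rpow (by positivity) hv,
      Nat.cast_ofNat, inv_mul_eq_div]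
  have hv_rpow : v ^ (1 + 2 / n : ℝ) = v * v ^ (2 / n : ℝ) :=
    Real.rpow_one_add' hv (by positivity)
  refine ⟨side / 2, by positivity, ?_⟩
  rw [mul_div_cancel₀ _ two_ne_zero, div_pow, hside_pow, hside_sq, hv_rpow, gammaDim]
  field_simp
  ring

theorem stmt_1_general {E : Type*} [NormedAddCommGroup E] [InnerProductSpace ℝ E]
    [FiniteDimensional ℝ E] [Nontrivial E] [MeasurableSpace E] [BorelSpace E] {V : Set E}
    (hcomp : IsCompact V) (hconv : Convex ℝ V) (hne : V.Nonempty) (y : E) :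
    ∃ y' ∈ V, gammaDim (finrank ℝ E) * volume.real V ^ (1 + 2 / finrank ℝ E : ℝ) ≤
      ∫ x in V, (dist x y ^ 2 - min (dist x y) (dist x y') ^ 2) := by
  obtain ⟨a, ha, hbound⟩ := exists_sq_mul_sub_pow_div_eq_gammaDim_mul
    (finrank_pos (R := ℝ) (M := E)).ne' (measureReal_nonneg (μ := volume) (s := V))
  obtain ⟨u, hu, hcap⟩ := exists_norm_eq_one_le_volume_real_cap hcomp.measure_ne_top y ha
  obtain ⟨y', hy'V, hgain⟩ :=
    exists_mem_sq_mul_volume_real_cap_le_setIntegral hcomp hconv hne y hu ha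
  refine ⟨y', hy'V, ?_⟩
  rw [← hbound]
  exact (mul_le_mul_of_nonneg_left hcap (sq_nonneg a)).trans hgain

theorem stmt_1 (V : Set E3) (hVcomp : IsCompact V) (hVconv : Convex ℝ V)
    (hVvol : 0 < volume V) (y : E3) (hy : y ∈ interior V) :
    ∃ y' ∈ V,
      (∫ x in V, (dist x y ^ 2 - (min (dist x y) (dist x y')) ^ 2)) ≥
        Gamma1 * (volume V).toReal ^ ((5 : ℝ) / 3) := by
  have hexponent : (1 + 2 / (3 : ℕ) : ℝ) = 5 / 3 := by norm_num
  simpa only [finrank_euclideanSpace_fin, gammaDim_three, hexponent, Measure.real] using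
    stmt_1_general hVcomp hVconv ⟨y, interior_subset hy⟩ y
end
end

section
/- Let n ≥ 1 and let Y_n be a minimizer of the quantization energy among subsets of Q with n points. Then for every y ∈ Y_n, the Voronoi cell V of y satisfies diam(V) ≥ Γ₃ · n^{−1/3}, where Γ₃ := ω₃^{−1/5}·Γ₁^{1/5} and Γ₁ := (2/5)^{2/3}/40. -/
open MeasureTheory

noncomputable section

/-- The closed unit cube Q = [0,1]³. -/
def Qcube : Set E3 := {x | ∀ i, x i ∈ Set.Icc (0 : ℝ) 1}

/-- The quantization energy E(Y) = ∫_Q dist(x,Y)² dx. -/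
def quantE (Y : Finset E3) : ℝ := ∫ x in Qcube, (Metric.infDist x (↑Y : Set E3)) ^ 2

/-- The Voronoi cell of a generator y ∈ Y, relative to Q. -/
def vorCell (Y : Finset E3) (y : E3) : Set E3 :=
  {x ∈ Qcube | ∀ z ∈ Y, dist x y ≤ dist x z}

/-- Y is a minimizer of the quantization energy among n-point subsets of Q. -/
def IsMinimizer (n : ℕ) (Y : Finset E3) : Prop :=
  (↑Y : Set E3) ⊆ Qcube ∧ Y.card = n ∧
    ∀ Z : Finset E3, (↑Z : Set E3) ⊆ Qcube → Z.card = n → quantE Y ≤ quantE Z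

/-- ω₃ = 4π/3, the volume of the unit ball in ℝ³. -/
def omega3 : ℝ := 4 * Real.pi / 3

/-- Γ₃ = ω₃^{-1/5} Γ₁^{1/5}. -/
def Gamma3 : ℝ := omega3 ^ (-(1 : ℝ) / 5) * Gamma1 ^ ((1 : ℝ) / 5)

/-- Γ₅ = (1/4)(√(1 + 2⁴·3³/(5²·10³)) − 1) Γ₃. -/
def Gamma5 : ℝ :=
  (1 / 4) * (Real.sqrt (1 + (2 ^ 4 * 3 ^ 3 : ℝ) / (5 ^ 2 * 10 ^ 3)) - 1) * Gamma3

/-- Γ₄, the diameter upper-bound constant. -/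
def Gamma4 : ℝ :=
  (2 * (12 : ℝ) ^ ((1 : ℝ) / 4) * (16 : ℝ) ^ ((1 : ℝ) / 3) /
      (Real.pi ^ ((1 : ℝ) / 4) * omega3 ^ ((1 : ℝ) / 12))) *
    (Real.sqrt (1 + (2 ^ 4 * 3 ^ 3 : ℝ) / (5 ^ 2 * 10 ^ 3)) - 1) ^ (-(1 : ℝ) / 2) *
    ((5 ^ 2 * 10 ^ 3 : ℝ) / (2 ^ 2 * 3 ^ 3)) ^ ((1 : ℝ) / 4)

/-!
Suppose that moving the single point `y` of `Y` never lowers the energy, and let `V` be its cell and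
`δ = diam V`. Deleting `y` is cheap: if `z` is the point of `Y` closest to `y`, the midpoint `m` of
`y` and `z` lies in `V`, so by Apollonius `|x - z|² - |x - y|² ≤ 2|x - m|² + 2|y - m|² ≤ 4δ²` on `V`
and the energy grows by at most `4δ²|V|`, which is at most `4δ⁵` in `ℝ³`.

Reinserting a suitable point `p` gains a lot: the gain is at least `∫_K (D(x)² - |x - p|²)⁺ dx` with
`D = min (dist(·, Y \ {y})) R`, and averaging this over all `p` in the `R`-neighbourhood of `K`
turns it into a multiple of `∫_K D(x)^(d+2) dx`, which is bounded below because the `R`-balls around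
the points are too small to cover `K`. A point `p` outside `K` may be used since its projection onto
`K` is closer to all of `K`. Optimality of `y` says that the gain is at most the cost; the choice
`R = 2/3 n^(-1/3)` yields the constant.
-/

open Metric Module

section Convex

variable {E : Type*} [NormedAddCommGroup E] [InnerProductSpace ℝ E]

theorem exists_mem_forall_dist_le_dist_of_convex {K : Set E} (hne : K.Nonempty)
    (hcomplete : IsComplete K) (hconvex : Convex ℝ K) (p : E) :
    ∃ q ∈ K, ∀ x ∈ K, dist x q ≤ dist x p := by
  obtain ⟨q, hq, hmin⟩ := exists_norm_eq_iInf_of_complete_convex hne hcomplete hconvex p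
  refine ⟨q, hq, fun x hx => ?_⟩
  have hobtuse : inner ℝ (p - q) (x - q) ≤ 0 :=
    (norm_eq_iInf_iff_real_inner_le_zero hconvex hq).1 hmin x hx
  have hcosine : ‖x - p‖ ^ 2 = ‖x - q‖ ^ 2 - 2 * inner ℝ (p - q) (x - q) + ‖p - q‖ ^ 2 := by
    rw [← sub_sub_sub_cancel_right x p q, norm_sub_sq_real, real_inner_comm]
  rw [dist_eq_norm, dist_eq_norm]
  refine le_of_sq_le_sq ?_ (norm_nonneg _)
  linarith [sq_nonneg ‖p - q‖]

end Convex

theorem exists_mem_infDist_eq_dist {E : Type*} [PseudoMetricSpace E] {X : Finset E}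
    (hX : X.Nonempty) (x : E) : ∃ z ∈ X, infDist x X = dist x z :=
  X.finite_toSet.isCompact.exists_infDist_eq_dist hX x

section Radial

/-- The amount `(r ^ k - dist x p ^ k)⁺` by which `p` is closer to `x` than `r`, measured in `k`-th
powers. It vanishes off the ball of radius `r` around `x`. -/
def powDeficit {E : Type*} [PseudoMetricSpace E] (k : ℕ) (r : ℝ) (x p : E) : ℝ :=
  max 0 (r ^ k - dist x p ^ k)

section PseudoMetric

variable {E : Type*} [PseudoMetricSpace E] {k : ℕ} {r : ℝ} {x p : E}

theorem powDeficit_nonneg : 0 ≤ powDeficit k r x p := le_max_left _ _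

theorem powDeficit_eq_zero (hr : 0 ≤ r) (h : r ≤ dist x p) : powDeficit k r x p = 0 :=
  max_eq_left (sub_nonpos.2 (pow_le_pow_left₀ hr h k))

@[fun_prop]
theorem continuous_powDeficit {X : Type*} [TopologicalSpace X] {f : X → ℝ} {g h : X → E}
    (hf : Continuous f) (hg : Continuous g) (hh : Continuous h) :
    Continuous fun a => powDeficit k (f a) (g a) (h a) := by
  unfold powDeficit
  fun_prop

theorem pow_sub_sum_powDeficit_le {X : Finset E} (hX : X.Nonempty) :
    r ^ k - ∑ z ∈ X, powDeficit k r z x ≤ min (infDist x X) r ^ k := by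
  obtain ⟨z, hz, hzx⟩ := exists_mem_infDist_eq_dist hX x
  have hsingle : powDeficit k r z x ≤ ∑ z ∈ X, powDeficit k r z x :=
    Finset.single_le_sum (f := fun z => powDeficit k r z x) (fun _ _ => powDeficit_nonneg) hz
  rw [hzx, dist_comm]
  rcases le_total (dist z x) r with h | h
  · rw [min_eq_left h]
    have hdeficit : r ^ k - dist z x ^ k ≤ powDeficit k r z x := le_max_right _ _
    linarith
  · rw [min_eq_right h]
    linarith [powDeficit_nonneg (k := k) (r := r) (x := z) (p := x)]

theorem powDeficit_min_infDist_le [DecidableEq E] {X : Finset E} (hX : X.Nonempty) (hr : 0 ≤ r)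
    {q : E} (hq : dist x q ≤ dist x p) :
    powDeficit k (min (infDist x X) r) x p ≤ infDist x X ^ k - infDist x ↑(insert q X) ^ k := by
  have hinsert : infDist x ↑(insert q X) ≤ infDist x X :=
    infDist_le_infDist_of_subset (Finset.coe_subset.2 (Finset.subset_insert q X)) hX
  have hp : infDist x ↑(insert q X) ≤ dist x p :=
    (infDist_le_dist_of_mem (Finset.mem_coe.2 (Finset.mem_insert_self q X))).trans hq
  refine max_le (sub_nonneg.2 (pow_le_pow_left₀ infDist_nonneg hinsert k))
    (sub_le_sub ?_ (pow_le_pow_left₀ infDist_nonneg hp k))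
  exact pow_le_pow_left₀ (le_min infDist_nonneg hr) (min_le_left _ _) k

end PseudoMetric

theorem integral_Ioi_pow_mul_max_zero_pow_sub_pow (k m : ℕ) {r : ℝ} (hr : 0 ≤ r) :
    ∫ s in Set.Ioi (0 : ℝ), s ^ m * max 0 (r ^ k - s ^ k) =
      k / ((m + 1) * (k + m + 1)) * r ^ (k + m + 1) := by
  have hsupport : ∫ s in Set.Ioi (0 : ℝ), s ^ m * max 0 (r ^ k - s ^ k) =
      ∫ s in Set.Ioc 0 r, s ^ m * max 0 (r ^ k - s ^ k) := by
    refine setIntegral_eq_of_subset_of_forall_sdiff_eq_zero measurableSet_Ioi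
      Set.Ioc_subset_Ioi_self fun s hs => ?_
    have hrs : r ≤ s := not_lt.1 fun h => hs.2 ⟨hs.1, h.le⟩
    rw [max_eq_left (sub_nonpos.2 (pow_le_pow_left₀ hr hrs k)), mul_zero]
  have hpolynomial : ∫ s in Set.Ioc 0 r, s ^ m * max 0 (r ^ k - s ^ k) =
      ∫ s in Set.Ioc 0 r, (r ^ k * s ^ m - s ^ (k + m)) := by
    refine setIntegral_congr_fun measurableSet_Ioc fun s hs => ?_
    simp only [max_eq_right (sub_nonneg.2 (pow_le_pow_left₀ hs.1.le hs.2 k))]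
    ring
  rw [hsupport, hpolynomial, ← intervalIntegral.integral_of_le hr,
    intervalIntegral.integral_sub (Continuous.intervalIntegrable (by fun_prop) _ _)
      (Continuous.intervalIntegrable (by fun_prop) _ _),
    intervalIntegral.integral_const_mul, integral_pow, integral_pow]
  have hm : (m : ℝ) + 1 ≠ 0 := by positivity
  have hkm : (k : ℝ) + m + 1 ≠ 0 := by positivity
  push_cast
  field_simp
  ring

variable {E : Type*} [NormedAddCommGroup E] [NormedSpace ℝ E] [MeasurableSpace E] (μ : Measure E)

/-- The integral of `powDeficit k 1 x` for a Haar measure `μ`, which does not depend on `x`. -/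
def powDeficitMass (k : ℕ) : ℝ := μ.real (ball 0 1) * (k / (k + finrank ℝ E))

theorem powDeficitMass_nonneg (k : ℕ) : 0 ≤ powDeficitMass μ k := by
  unfold powDeficitMass
  positivity

variable [FiniteDimensional ℝ E] [BorelSpace E] [μ.IsAddHaarMeasure]

theorem integrable_powDeficit (k : ℕ) {r : ℝ} (hr : 0 ≤ r) (x : E) :
    Integrable (powDeficit k r x) μ := by
  have hcont : Continuous (powDeficit k r x) := by fun_prop
  refine hcont.integrable_of_hasCompactSupport
    (HasCompactSupport.intro (isCompact_closedBall x r) fun p hp => powDeficit_eq_zero hr ?_)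
  rw [mem_closedBall, not_le, dist_comm] at hp
  exact hp.le

theorem integral_powDeficit [Nontrivial E] (k : ℕ) {r : ℝ} (hr : 0 ≤ r) (x : E) :
    ∫ p, powDeficit k r x p ∂μ = powDeficitMass μ k * r ^ (k + finrank ℝ E) := by
  have hcentre : ∫ p, powDeficit k r x p ∂μ = ∫ p : E, max 0 (r ^ k - ‖p‖ ^ k) ∂μ := by
    rw [← integral_sub_left_eq_self _ μ x]
    simp only [powDeficit, dist_eq_norm, sub_sub_cancel]
  obtain ⟨m, hm⟩ := Nat.exists_eq_add_one_of_ne_zero (finrank_pos (R := ℝ) (M := E)).ne'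
  rw [hcentre, integral_fun_norm_addHaar μ fun s => max 0 (r ^ k - s ^ k), powDeficitMass, hm]
  simp only [Nat.add_sub_cancel, smul_eq_mul, nsmul_eq_mul,
    integral_Ioi_pow_mul_max_zero_pow_sub_pow k m hr]
  push_cast
  rw [← add_assoc, ← add_assoc]
  field_simp

/-- Fubini: seen from `x`, the deficit is supported in the ball of radius `f x ≤ R`, so integrating
over the `R`-neighbourhood of `K` catches all of it. -/
theorem setIntegral_cthickening_setIntegral_powDeficit [Nontrivial E] (k : ℕ) {K : Set E}
    (hK : IsCompact K) {f : E → ℝ} (hf : Continuous f) (hf0 : ∀ x, 0 ≤ f x) {R : ℝ}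
    (hfR : ∀ x, f x ≤ R) :
    ∫ p in cthickening R K, ∫ x in K, powDeficit k (f x) x p ∂μ ∂μ =
      powDeficitMass μ k * ∫ x in K, f x ^ (k + finrank ℝ E) ∂μ := by
  have hcont : Continuous (Function.uncurry fun x p => powDeficit k (f x) x p) := by fun_prop
  have hint : Integrable (Function.uncurry fun x p => powDeficit k (f x) x p)
      ((μ.restrict K).prod (μ.restrict (cthickening R K))) := by
    rw [Measure.prod_restrict]
    exact hcont.continuousOn.integrableOn_compact (hK.prod hK.cthickening)
  rw [← integral_integral_swap hint, ← integral_const_mul]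
  refine setIntegral_congr_fun hK.measurableSet fun x hx => ?_
  rw [← integral_powDeficit μ k (hf0 x) x]
  refine setIntegral_eq_integral_of_forall_compl_eq_zero fun p hp => powDeficit_eq_zero (hf0 x) ?_
  refine le_of_not_ge fun hpx => hp (mem_cthickening_of_dist_le p x R K hx ?_)
  rw [dist_comm]
  exact hpx.trans (hfR x)

theorem le_setIntegral_min_infDist_pow [Nontrivial E] (k : ℕ) {K : Set E} (hK : IsCompact K)
    {X : Finset E} (hX : X.Nonempty) {R : ℝ} (hR : 0 ≤ R) :
    μ.real K * R ^ k - X.card * (powDeficitMass μ k * R ^ (k + finrank ℝ E)) ≤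
      ∫ x in K, min (infDist x X) R ^ k ∂μ := by
  have hball (z : E) : ∫ x in K, powDeficit k R z x ∂μ ≤
      powDeficitMass μ k * R ^ (k + finrank ℝ E) := by
    rw [← integral_powDeficit μ k hR z]
    exact setIntegral_le_integral (integrable_powDeficit μ k hR z)
      (Filter.Eventually.of_forall fun _ => powDeficit_nonneg)
  have hconst : IntegrableOn (fun _ => R ^ k) K μ := integrableOn_const hK.measure_lt_top.ne
  have hdeficit (z : E) : IntegrableOn (powDeficit k R z) K μ :=
    (integrable_powDeficit μ k hR z).integrableOn
  have hsum : IntegrableOn (fun x => ∑ z ∈ X, powDeficit k R z x) K μ :=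
    integrable_finsetSum _ fun z _ => hdeficit z
  have hmin : IntegrableOn (fun x => min (infDist x X) R ^ k) K μ :=
    (((continuous_infDist_pt _).min continuous_const).pow k).continuousOn.integrableOn_compact hK
  calc _ ≤ μ.real K * R ^ k - ∑ z ∈ X, ∫ x in K, powDeficit k R z x ∂μ := by
        gcongr
        rw [← nsmul_eq_mul]
        exact Finset.sum_le_card_nsmul _ _ _ fun z _ => hball z
    _ = ∫ x in K, (R ^ k - ∑ z ∈ X, powDeficit k R z x) ∂μ := by
        rw [integral_sub hconst hsum, integral_finsetSum _ fun z _ => hdeficit z,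
          setIntegral_const, smul_eq_mul]
    _ ≤ _ := integral_mono (hconst.sub hsum) hmin fun x => pow_sub_sum_powDeficit_le hX

end Radial

section Voronoi

/-- The Voronoi cell of `y` relative to a domain `K`; `vorCell` is the case of the cube. -/
def voronoiCell {E : Type*} [PseudoMetricSpace E] (K : Set E) (Y : Finset E) (y : E) : Set E :=
  {x ∈ K | ∀ z ∈ Y, dist x y ≤ dist x z}

/-- The quantization energy of `Y` with respect to the measure `μ` on a domain `K`; `quantE` is the
case of Lebesgue measure on the cube. -/
def quantEnergy {E : Type*} [PseudoMetricSpace E] [MeasurableSpace E] (μ : Measure E) (K : Set E)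
    (Y : Finset E) : ℝ :=
  ∫ x in K, infDist x Y ^ 2 ∂μ

section PseudoMetric

variable {E : Type*} [PseudoMetricSpace E] {K : Set E} {Y : Finset E} {y : E}

theorem voronoiCell_subset : voronoiCell K Y y ⊆ K := fun _ hx => hx.1

theorem self_mem_voronoiCell (hy : y ∈ K) : y ∈ voronoiCell K Y y :=
  ⟨hy, fun _ _ => (dist_self y).trans_le dist_nonneg⟩

theorem isCompact_voronoiCell (hK : IsCompact K) : IsCompact (voronoiCell K Y y) := by
  have heq : voronoiCell K Y y = K ∩ ⋂ z ∈ Y, {x | dist x y ≤ dist x z} := by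
    ext x
    simp [voronoiCell]
  rw [heq]
  exact hK.inter_right <| isClosed_biInter fun z _ => isClosed_le (by fun_prop) (by fun_prop)

theorem dist_le_infDist_of_mem_voronoiCell (hyY : y ∈ Y) {x : E} (hx : x ∈ voronoiCell K Y y) :
    dist x y ≤ infDist x Y :=
  (le_infDist ⟨y, hyY⟩).2 fun _ hz => hx.2 _ hz

theorem infDist_erase_le_infDist_of_notMem_voronoiCell [DecidableEq E] {x : E} (hxK : x ∈ K)
    (hx : x ∉ voronoiCell K Y y) : infDist x (Y.erase y) ≤ infDist x Y := by
  obtain ⟨w, hwY, hw⟩ : ∃ w ∈ Y, dist x w < dist x y := by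
    by_contra! h
    exact hx ⟨hxK, h⟩
  obtain ⟨z, hzY, hz⟩ := exists_mem_infDist_eq_dist ⟨w, hwY⟩ x
  have hzy : z ≠ y := by
    rintro rfl
    exact (infDist_le_dist_of_mem (Finset.mem_coe.2 hwY)).not_gt (hz ▸ hw)
  rw [hz]
  exact infDist_le_dist_of_mem (Finset.mem_coe.2 (Finset.mem_erase.2 ⟨hzy, hzY⟩))

end PseudoMetric

section Metric

variable {E : Type*} [MetricSpace E] {K : Set E} {Y : Finset E} [MeasurableSpace E] [BorelSpace E]
  (μ : Measure E) [IsFiniteMeasureOnCompacts μ]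

theorem integrableOn_sq_infDist (hK : IsCompact K) (X : Set E) :
    IntegrableOn (fun x => infDist x X ^ 2) K μ :=
  ((continuous_infDist_pt X).pow 2).continuousOn.integrableOn_compact hK

theorem quantEnergy_anti (hK : IsCompact K) {X : Finset E} (hX : X.Nonempty) (hXY : X ⊆ Y) :
    quantEnergy μ K Y ≤ quantEnergy μ K X :=
  integral_mono (integrableOn_sq_infDist μ hK _) (integrableOn_sq_infDist μ hK _) fun _ =>
    pow_le_pow_left₀ infDist_nonneg
      (infDist_le_infDist_of_subset (Finset.coe_subset.2 hXY) hX) 2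

theorem setIntegral_powDeficit_le_quantEnergy_sub [DecidableEq E] (hK : IsCompact K) {X : Finset E}
    (hX : X.Nonempty) {R : ℝ} (hR : 0 ≤ R) {p q : E} (hpq : ∀ x ∈ K, dist x q ≤ dist x p) :
    ∫ x in K, powDeficit 2 (min (infDist x X) R) x p ∂μ ≤
      quantEnergy μ K X - quantEnergy μ K (insert q X) := by
  have hdeficit : Continuous fun x => powDeficit 2 (min (infDist x X) R) x p := by fun_prop
  rw [quantEnergy, quantEnergy,
    ← integral_sub (integrableOn_sq_infDist μ hK _) (integrableOn_sq_infDist μ hK _)]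
  exact setIntegral_mono_on (hdeficit.continuousOn.integrableOn_compact hK)
    ((integrableOn_sq_infDist μ hK _).sub (integrableOn_sq_infDist μ hK _))
    hK.measurableSet fun x hx => powDeficit_min_infDist_le hX hR (hpq x hx)

end Metric

variable {E : Type*} [NormedAddCommGroup E] [InnerProductSpace ℝ E] {K : Set E} {Y : Finset E}
  {y : E}

theorem midpoint_mem_voronoiCell (hK : Convex ℝ K) (hyK : y ∈ K) {z : E} (hzK : z ∈ K)
    (hz : ∀ u ∈ Y, u ≠ y → dist y z ≤ dist y u) : midpoint ℝ y z ∈ voronoiCell K Y y := by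
  refine ⟨hK.midpoint_mem hyK hzK, fun u hu => ?_⟩
  rcases eq_or_ne u y with rfl | huy
  · rfl
  · have hhalf : dist (midpoint ℝ y z) y = dist y z / 2 := by
      rw [dist_midpoint_left, Real.norm_ofNat, inv_mul_eq_div]
    have htriangle := dist_triangle_left y u (midpoint ℝ y z)
    linarith [hz u hu huy]

theorem exists_mem_erase_forall_sq_dist_le [DecidableEq E] (hK : Convex ℝ K)
    (hbdd : Bornology.IsBounded K) (hYK : ↑Y ⊆ K) (hyY : y ∈ Y) (hX : (Y.erase y).Nonempty) :
    ∃ z ∈ Y.erase y, ∀ x ∈ voronoiCell K Y y,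
      dist x z ^ 2 ≤ dist x y ^ 2 + 4 * diam (voronoiCell K Y y) ^ 2 := by
  obtain ⟨z, hz, hmin⟩ := Finset.exists_min_image (Y.erase y) (dist y) hX
  refine ⟨z, hz, fun x hx => ?_⟩
  have hmV : midpoint ℝ y z ∈ voronoiCell K Y y :=
    midpoint_mem_voronoiCell hK (hYK hyY) (hYK (Finset.mem_of_mem_erase hz))
      fun u hu huy => hmin u (Finset.mem_erase.2 ⟨huy, hu⟩)
  have hV : Bornology.IsBounded (voronoiCell K Y y) := hbdd.subset voronoiCell_subset
  have hxm : dist x (midpoint ℝ y z) ≤ diam (voronoiCell K Y y) := dist_le_diam_of_mem hV hx hmV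
  have hym : dist y z / 2 ≤ diam (voronoiCell K Y y) := by
    rw [← inv_mul_eq_div, ← Real.norm_ofNat, ← dist_left_midpoint (𝕜 := ℝ)]
    exact dist_le_diam_of_mem hV (self_mem_voronoiCell (hYK hyY)) hmV
  have hApollonius :=
    EuclideanGeometry.dist_sq_add_dist_sq_eq_two_mul_dist_midpoint_sq_add_half_dist_sq x y z
  have hxm2 := pow_le_pow_left₀ dist_nonneg hxm 2
  have hym2 := pow_le_pow_left₀ (by positivity) hym 2
  linarith [sq_nonneg (dist x y)]

variable [MeasurableSpace E] [BorelSpace E] (μ : Measure E)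

theorem quantEnergy_erase_le [DecidableEq E] [IsFiniteMeasureOnCompacts μ] (hK : IsCompact K)
    (hconvex : Convex ℝ K) (hYK : ↑Y ⊆ K) (hyY : y ∈ Y) (hX : (Y.erase y).Nonempty) :
    quantEnergy μ K (Y.erase y) ≤ quantEnergy μ K Y +
      4 * diam (voronoiCell K Y y) ^ 2 * μ.real (voronoiCell K Y y) := by
  set V := voronoiCell K Y y
  obtain ⟨z, hz, hzV⟩ := exists_mem_erase_forall_sq_dist_le hconvex hK.isBounded hYK hyY hX
  have hVmeas : MeasurableSet V := (isCompact_voronoiCell hK).measurableSet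
  have hincrease : ∫ x in K, V.indicator (fun _ => 4 * diam V ^ 2) x ∂μ =
      4 * diam V ^ 2 * μ.real V := by
    rw [setIntegral_indicator hVmeas, Set.inter_eq_right.2 voronoiCell_subset, setIntegral_const,
      smul_eq_mul, mul_comm]
  have hindicator : IntegrableOn (V.indicator fun _ => 4 * diam V ^ 2) K μ :=
    (integrableOn_const hK.measure_lt_top.ne).indicator hVmeas
  rw [← hincrease, quantEnergy, quantEnergy,
    ← integral_add (integrableOn_sq_infDist μ hK _) hindicator]
  refine setIntegral_mono_on (integrableOn_sq_infDist μ hK _)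
    ((integrableOn_sq_infDist μ hK _).add hindicator) hK.measurableSet fun x hx => ?_
  by_cases hxV : x ∈ V
  · rw [Set.indicator_of_mem hxV]
    calc infDist x (Y.erase y) ^ 2 ≤ dist x z ^ 2 := by
          gcongr
          exacts [infDist_nonneg, infDist_le_dist_of_mem (Finset.mem_coe.2 hz)]
      _ ≤ dist x y ^ 2 + 4 * diam V ^ 2 := hzV x hxV
      _ ≤ infDist x Y ^ 2 + 4 * diam V ^ 2 := by
          gcongr
          exact dist_le_infDist_of_mem_voronoiCell hyY hxV
  · rw [Set.indicator_of_notMem hxV, add_zero]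
    gcongr
    exacts [infDist_nonneg, infDist_erase_le_infDist_of_notMem_voronoiCell hx hxV]

theorem insertion_gain_le_deletion_cost [DecidableEq E] [FiniteDimensional ℝ E] [Nontrivial E]
    [μ.IsAddHaarMeasure] (hK : IsCompact K) (hconvex : Convex ℝ K) (hYK : ↑Y ⊆ K) (hyY : y ∈ Y)
    (hX : (Y.erase y).Nonempty)
    (hopt : ∀ p ∈ K, quantEnergy μ K Y ≤ quantEnergy μ K (insert p (Y.erase y)))
    {R : ℝ} (hR : 0 ≤ R) :
    powDeficitMass μ 2 * (μ.real K * R ^ (2 + finrank ℝ E) - (Y.erase y).card *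
        (powDeficitMass μ (2 + finrank ℝ E) * R ^ (2 + finrank ℝ E + finrank ℝ E))) ≤
      4 * diam (voronoiCell K Y y) ^ 2 * μ.real (voronoiCell K Y y) *
        μ.real (cthickening R K) := by
  set X := Y.erase y
  set D : E → ℝ := fun x => min (infDist x X) R
  have hD : Continuous D := (continuous_infDist_pt _).min continuous_const
  have hgain (p : E) : ∫ x in K, powDeficit 2 (D x) x p ∂μ ≤
      4 * diam (voronoiCell K Y y) ^ 2 * μ.real (voronoiCell K Y y) := by
    obtain ⟨q, hqK, hq⟩ :=
      exists_mem_forall_dist_le_dist_of_convex ⟨y, hYK hyY⟩ hK.isComplete hconvex p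
    linarith [setIntegral_powDeficit_le_quantEnergy_sub μ hK hX hR hq, hopt q hqK,
      quantEnergy_erase_le μ hK hconvex hYK hyY hX]
  have hN : μ (cthickening R K) ≠ ⊤ := hK.cthickening.measure_lt_top.ne
  calc _ ≤ powDeficitMass μ 2 * ∫ x in K, D x ^ (2 + finrank ℝ E) ∂μ := by
        refine mul_le_mul_of_nonneg_left ?_ (powDeficitMass_nonneg μ 2)
        exact le_setIntegral_min_infDist_pow μ _ hK hX hR
    _ = ∫ p in cthickening R K, ∫ x in K, powDeficit 2 (D x) x p ∂μ ∂μ :=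
        (setIntegral_cthickening_setIntegral_powDeficit μ 2 hK hD
          (fun x => le_min infDist_nonneg hR) fun x => min_le_right _ _).symm
    _ ≤ ∫ _ in cthickening R K, 4 * diam (voronoiCell K Y y) ^ 2 * μ.real (voronoiCell K Y y) ∂μ :=
        integral_mono_of_nonneg
          (Filter.Eventually.of_forall fun _ => integral_nonneg fun _ => powDeficit_nonneg)
          (integrableOn_const hN) (Filter.Eventually.of_forall hgain)
    _ = _ := by rw [setIntegral_const, smul_eq_mul, mul_comm]

end Voronoi

section Box

variable {ι : Type*}

/-- The cube `[a, b]^ι` in Euclidean space; `Qcube` is `euclideanBox (Fin 3) 0 1`. -/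
def euclideanBox (ι : Type*) (a b : ℝ) : Set (EuclideanSpace ℝ ι) :=
  {x | ∀ i, x i ∈ Set.Icc a b}

theorem euclideanBox_eq_preimage (a b : ℝ) :
    euclideanBox ι a b = WithLp.ofLp ⁻¹' Set.Icc (fun _ => a) (fun _ => b) :=
  Set.ext fun _ => ⟨fun h => ⟨fun i => (h i).1, fun i => (h i).2⟩, fun h i => ⟨h.1 i, h.2 i⟩⟩

theorem convex_euclideanBox (a b : ℝ) : Convex ℝ (euclideanBox ι a b) :=
  fun _ hx _ hy _ _ hs ht hst i => convex_Icc a b (hx i) (hy i) hs ht hst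

theorem isCompact_euclideanBox (a b : ℝ) : IsCompact (euclideanBox ι a b) := by
  rw [euclideanBox_eq_preimage]
  exact (PiLp.homeomorph 2 fun _ : ι => ℝ).isClosedEmbedding.isCompact_preimage isCompact_Icc

variable [Fintype ι]

theorem volume_real_euclideanBox {a b : ℝ} (hab : a ≤ b) :
    volume.real (euclideanBox ι a b) = (b - a) ^ Fintype.card ι := by
  rw [measureReal_def, euclideanBox_eq_preimage,
    (PiLp.volume_preserving_ofLp ι).measure_preimage measurableSet_Icc.nullMeasurableSet,
    Real.volume_Icc_pi_toReal fun _ => hab, Finset.prod_const, Finset.card_univ]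

theorem cthickening_euclideanBox_subset (a b : ℝ) {R : ℝ} (hR : 0 ≤ R) :
    cthickening R (euclideanBox ι a b) ⊆ euclideanBox ι (a - R) (b + R) := by
  rw [(isCompact_euclideanBox a b).cthickening_eq_biUnion_closedBall hR]
  refine Set.iUnion₂_subset fun x hx p hp i => ?_
  have hi : |p i - x i| ≤ R := by
    rw [mem_closedBall, dist_eq_norm] at hp
    exact (PiLp.norm_apply_le (p - x) i).trans hp
  obtain ⟨hlower, hupper⟩ := abs_le.1 hi
  obtain ⟨ha, hb⟩ := hx i
  constructor <;> linarith

theorem volume_real_cthickening_euclideanBox_le {a b : ℝ} (hab : a ≤ b) {R : ℝ} (hR : 0 ≤ R) :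
    volume.real (cthickening R (euclideanBox ι a b)) ≤ (b - a + 2 * R) ^ Fintype.card ι := by
  calc _ ≤ volume.real (euclideanBox ι (a - R) (b + R)) :=
        measureReal_mono (cthickening_euclideanBox_subset a b hR)
          (isCompact_euclideanBox _ _).measure_lt_top.ne
    _ = _ := by
        rw [volume_real_euclideanBox (by linarith)]
        ring

theorem volume_real_le_diam_pow {V : Set (EuclideanSpace ℝ ι)} (hV : Bornology.IsBounded V) :
    volume.real V ≤ diam V ^ Fintype.card ι := by
  set W : Set (ι → ℝ) := WithLp.toLp 2 ⁻¹' V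
  have hvolume : volume W = volume V :=
    (PiLp.volume_preserving_toLp ι).measure_preimage_equiv
      (f := MeasurableEquiv.toLp 2 (ι → ℝ)) V
  have hediam : ediam W ≤ ediam V := ediam_le fun x hx y hy =>
    ((PiLp.lipschitzWith_ofLp 2 fun _ : ι => ℝ).edist_le_mul
      (WithLp.toLp 2 x) (WithLp.toLp 2 y)).trans <| by
        simpa using edist_le_ediam_of_mem (s := V) hx hy
  have hle : volume V ≤ ediam V ^ Fintype.card ι :=
    hvolume ▸ (Real.volume_pi_le_diam_pow W).trans (pow_le_pow_left' hediam _)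
  rw [measureReal_def, diam, ← ENNReal.toReal_pow]
  exact ENNReal.toReal_mono (ENNReal.pow_ne_top hV.ediam_ne_top) hle

end Box

section Constants

theorem volume_real_ball_eq_omega3 : volume.real (ball (0 : E3) 1) = omega3 := by
  rw [measureReal_def, EuclideanSpace.volume_ball_fin_three, ENNReal.ofReal_one, one_pow, one_mul,
    ENNReal.toReal_ofReal (by positivity), omega3]
  ring

theorem omega3_mem_Icc : omega3 ∈ Set.Icc (25 / 6 : ℝ) (21 / 5) := by
  unfold omega3
  constructor <;> linarith [Real.pi_gt_d2, Real.pi_lt_d2]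

theorem Gamma1_pos : 0 < Gamma1 := by
  unfold Gamma1
  positivity

theorem Gamma1_le : Gamma1 ≤ 11 / 800 := by
  have hcube : ((2 / 5 : ℝ) ^ (2 / 3 : ℝ)) ^ 3 ≤ (11 / 20) ^ 3 := by
    rw [← Real.rpow_mul_natCast (by norm_num)]
    norm_num
  have hroot := le_of_pow_le_pow_left₀ three_ne_zero (by norm_num) hcube
  unfold Gamma1
  linarith

theorem Gamma3_pow_five : Gamma3 ^ 5 = Gamma1 / omega3 := by
  have hω : 0 ≤ omega3 := by linarith [omega3_mem_Icc.1]
  rw [Gamma3, mul_pow, ← Real.rpow_mul_natCast hω, ← Real.rpow_mul_natCast Gamma1_pos.le]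
  norm_num [Real.rpow_neg_one, div_eq_inv_mul]

theorem Gamma3_mul_le_of_Gamma1_mul_pow_le {t δ : ℝ} (hδ : 0 ≤ δ)
    (h : Gamma1 * t ^ 5 ≤ omega3 * δ ^ 5) : Gamma3 * t ≤ δ := by
  have hω : 0 < omega3 := by linarith [omega3_mem_Icc.1]
  refine le_of_pow_le_pow_left₀ (n := 5) (by norm_num) hδ ?_
  rw [mul_pow, Gamma3_pow_five, div_mul_eq_mul_div, div_le_iff₀ hω, mul_comm (δ ^ 5)]
  exact h

theorem Gamma1_mul_cube_le {t : ℝ} (ht : 0 ≤ t) (ht1 : t ≤ 1) :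
    Gamma1 * (1 + 4 / 3 * t) ^ 3 ≤
      omega3 * (2 / 5) * (2 / 3) ^ 5 * (1 - 5 / 8 * omega3 * (2 / 3) ^ 3 * (1 - t ^ 3)) := by
  obtain ⟨hω, hω'⟩ := omega3_mem_Icc
  have ht3 : 0 ≤ 1 - t ^ 3 := sub_nonneg.2 (pow_le_one₀ ht ht1)
  have hpolynomial : (3 + 4 * t) ^ 3 ≤ 47 * (2 + 7 * t ^ 3) := by
    nlinarith [mul_nonneg ht (sq_nonneg (t - 3 / 5)), sq_nonneg (t - 3 / 5)]
  have hfactor : (2 + 7 * t ^ 3) / 9 ≤ 1 - 5 / 8 * omega3 * (2 / 3) ^ 3 * (1 - t ^ 3) := by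
    linarith [mul_le_mul_of_nonneg_right hω' ht3]
  calc Gamma1 * (1 + 4 / 3 * t) ^ 3 ≤ 11 / 800 * (1 + 4 / 3 * t) ^ 3 := by
        gcongr
        exact Gamma1_le
    _ ≤ 25 / 6 * (2 / 5) * (2 / 3) ^ 5 * ((2 + 7 * t ^ 3) / 9) := by
        linarith [pow_nonneg ht 3]
    _ ≤ _ := by gcongr

theorem Gamma1_mul_pow_le_of_gain_le_cost {t m δ : ℝ} (ht : 0 ≤ t) (ht1 : t ≤ 1)
    (hm : (m + 1) * t ^ 3 = 1) (hδ : 0 ≤ δ)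
    (h : omega3 * (2 / 5) *
        ((2 / 3 * t) ^ 5 - m * (omega3 * (5 / 8) * (2 / 3 * t) ^ 8)) ≤
      4 * δ ^ 5 * (1 + 2 * (2 / 3 * t)) ^ 3) :
    Gamma1 * t ^ 5 ≤ omega3 * δ ^ 5 := by
  have hω : 4 ≤ omega3 := by linarith [omega3_mem_Icc.1]
  have hmt : m * t ^ 3 = 1 - t ^ 3 := by linarith
  refine le_of_mul_le_mul_right ?_ (show 0 < (1 + 4 / 3 * t) ^ 3 by positivity)
  calc Gamma1 * t ^ 5 * (1 + 4 / 3 * t) ^ 3 = Gamma1 * (1 + 4 / 3 * t) ^ 3 * t ^ 5 := by ring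
    _ ≤ omega3 * (2 / 5) * (2 / 3) ^ 5 * (1 - 5 / 8 * omega3 * (2 / 3) ^ 3 * (1 - t ^ 3)) *
        t ^ 5 := by
        gcongr ?_ * _
        exact Gamma1_mul_cube_le ht ht1
    _ = omega3 * (2 / 5) * ((2 / 3 * t) ^ 5 - m * (omega3 * (5 / 8) * (2 / 3 * t) ^ 8)) := by
        rw [← hmt]
        ring
    _ ≤ 4 * δ ^ 5 * (1 + 2 * (2 / 3 * t)) ^ 3 := h
    _ = 4 * δ ^ 5 * (1 + 4 / 3 * t) ^ 3 := by ring
    _ ≤ omega3 * δ ^ 5 * (1 + 4 / 3 * t) ^ 3 := by gcongr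

theorem mul_pow_three_rpow_neg_one_div_three {s : ℝ} (hs : 0 < s) :
    s * (s ^ (-(1 : ℝ) / 3)) ^ 3 = 1 := by
  rw [← Real.rpow_mul_natCast hs.le]
  norm_num [Real.rpow_neg_one, hs.ne']

end Constants

section Cube

variable {Y : Finset E3} {y : E3}

theorem volume_real_Qcube : volume.real Qcube = 1 :=
  (volume_real_euclideanBox zero_le_one).trans (by simp)

theorem insertion_gain_le_deletion_cost_Qcube [DecidableEq E3] (hYQ : ↑Y ⊆ Qcube) (hyY : y ∈ Y)
    (hX : (Y.erase y).Nonempty)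
    (hopt : ∀ p ∈ Qcube, quantE Y ≤ quantE (insert p (Y.erase y))) {R : ℝ} (hR : 0 ≤ R) :
    omega3 * (2 / 5) * (R ^ 5 - (Y.erase y).card * (omega3 * (5 / 8) * R ^ 8)) ≤
      4 * diam (vorCell Y y) ^ 5 * (1 + 2 * R) ^ 3 := by
  have hQ : IsCompact Qcube := isCompact_euclideanBox 0 1
  have hvolN : volume.real (cthickening R Qcube) ≤ (1 + 2 * R) ^ 3 :=
    (volume_real_cthickening_euclideanBox_le zero_le_one hR).trans_eq (by simp)
  have hvolV : volume.real (vorCell Y y) ≤ diam (vorCell Y y) ^ 3 :=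
    volume_real_le_diam_pow (hQ.isBounded.subset voronoiCell_subset)
  have hswap := insertion_gain_le_deletion_cost volume hQ (convex_euclideanBox 0 1) hYQ hyY hX
    hopt hR
  rw [powDeficitMass, powDeficitMass, volume_real_ball_eq_omega3, volume_real_Qcube,
    finrank_euclideanSpace, Fintype.card_fin] at hswap
  calc _ = _ := by norm_num
    _ ≤ 4 * diam (vorCell Y y) ^ 2 * volume.real (vorCell Y y) *
        volume.real (cthickening R Qcube) := hswap
    _ ≤ 4 * diam (vorCell Y y) ^ 2 * diam (vorCell Y y) ^ 3 * (1 + 2 * R) ^ 3 := by gcongr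
    _ = 4 * diam (vorCell Y y) ^ 5 * (1 + 2 * R) ^ 3 := by ring

theorem one_le_diam_Qcube : 1 ≤ diam Qcube := by
  refine le_of_pow_le_pow_left₀ three_ne_zero diam_nonneg ?_
  rw [one_pow, ← volume_real_Qcube]
  exact volume_real_le_diam_pow (isCompact_euclideanBox 0 1).isBounded

theorem vorCell_singleton : vorCell {y} y = Qcube := by
  simp [vorCell]

theorem IsMinimizer.quantE_le_quantE_insert_erase [DecidableEq E3] {n : ℕ} (hY : IsMinimizer n Y)
    (hyY : y ∈ Y) {p : E3} (hp : p ∈ Qcube) : quantE Y ≤ quantE (insert p (Y.erase y)) := by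
  obtain ⟨hYQ, hcard, hmin⟩ := hY
  by_cases hpY : p ∈ Y
  · exact quantEnergy_anti volume (isCompact_euclideanBox 0 1) (Finset.insert_nonempty _ _)
      (Finset.insert_subset hpY (Finset.erase_subset _ _))
  · refine hmin _ ?_ ?_
    · rw [Finset.coe_insert, Set.insert_subset_iff]
      exact ⟨hp, (Finset.coe_subset.2 (Finset.erase_subset _ _)).trans hYQ⟩
    · rw [Finset.card_insert_of_notMem fun h => hpY (Finset.mem_of_mem_erase h),
        Finset.card_erase_add_one hyY, hcard]

end Cube

theorem stmt_3_general [DecidableEq E3] (Y : Finset E3) (hYQ : (↑Y : Set E3) ⊆ Qcube) (y : E3)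
    (hyY : y ∈ Y) (hopt : ∀ p ∈ Qcube, quantE Y ≤ quantE (insert p (Y.erase y))) :
    Gamma3 * (Y.card : ℝ) ^ (-(1 : ℝ) / 3) ≤ diam (vorCell Y y) := by
  set t : ℝ := (Y.card : ℝ) ^ (-(1 : ℝ) / 3)
  have hcard : 1 ≤ (Y.card : ℝ) := by exact_mod_cast Finset.card_pos.2 ⟨y, hyY⟩
  have ht : 0 ≤ t := by positivity
  have ht1 : t ≤ 1 := Real.rpow_le_one_of_one_le_of_nonpos hcard (by norm_num)
  refine Gamma3_mul_le_of_Gamma1_mul_pow_le diam_nonneg ?_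
  rcases (Y.erase y).eq_empty_or_nonempty with hX | hX
  · obtain rfl : Y = {y} := by rw [← Finset.insert_erase hyY, hX, insert_empty_eq]
    rw [vorCell_singleton]
    have hd : 1 ≤ diam Qcube ^ 5 := one_le_pow₀ one_le_diam_Qcube
    have hΓ : Gamma1 ≤ omega3 := by linarith [Gamma1_le, omega3_mem_Icc.1]
    have hΓ0 : 0 ≤ Gamma1 := Gamma1_pos.le
    exact mul_le_mul hΓ ((pow_le_one₀ ht ht1).trans hd) (by positivity) (by linarith)
  · refine Gamma1_mul_pow_le_of_gain_le_cost ht ht1 ?_ diam_nonneg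
      (insertion_gain_le_deletion_cost_Qcube hYQ hyY hX hopt (by positivity))
    rw [← Nat.cast_add_one, Finset.card_erase_add_one hyY]
    exact mul_pow_three_rpow_neg_one_div_three (by linarith)

theorem stmt_3 (n : ℕ) (hn : 1 ≤ n) (Y : Finset E3) (hY : IsMinimizer n Y)
    (y : E3) (hyY : y ∈ Y) :
    Metric.diam (vorCell Y y) ≥ Gamma3 * (n : ℝ) ^ (-(1 : ℝ) / 3) := by
  classical
  rw [← hY.2.1]
  exact stmt_3_general Y hY.1 y hyY fun p hp => hY.quantE_le_quantE_insert_erase hyY hp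
end
end
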